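/- Let N ≥ 1 and 1 ≤ m ≤ k, and for each j with m ≤ j ≤ k let 𝒬^(j) = (q^(j)_1, …, q^(j)_{N^j}) be a tuple of vectors in Δ_N. Define N×N matrices recursively: Q̄^(k+1)_i := E_N for 1 ≤ i ≤ N^k, and for m ≤ l ≤ k and 1 ≤ i ≤ N^{l-1}, let Q̄^(l)_i be the N×N matrix whose j-th column (1 ≤ j ≤ N) is the vector Q̄^(l+1)_{N(i-1)+j} q^(l)_{N(i-1)+j}. Then the k-shift matrix satisfies S(𝒬^(m), …, 𝒬^(k)) = C^m_1 Σ_{i=1}^{N^{m-1}} E_{N^{m-1},i} ⊗ Q̄^(m)_i. -/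

import Mathlib

open Matrix BigOperators Filter Topology

noncomputable section

/-- Cast a `Fin`-indexed matrix along equalities of the dimensions. -/
def castM {a b a' b' : ℕ} (ha : a = a') (hb : b = b') (A : Matrix (Fin a) (Fin b) ℝ) :
    Matrix (Fin a') (Fin b') ℝ :=
  Matrix.reindex (finCongr ha) (finCongr hb) A

/-- Kronecker product (row-major convention) of `Fin`-indexed real matrices. -/
def kron {a b c d : ℕ} (A : Matrix (Fin a) (Fin b) ℝ) (B : Matrix (Fin c) (Fin d) ℝ) :
    Matrix (Fin (a * c)) (Fin (b * d)) ℝ :=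
  Matrix.of fun i j => A i.divNat j.divNat * B i.modNat j.modNat

/-- Standard basis column vector `e_{n,i}` (as an `n × 1` matrix). -/
def eCol (n : ℕ) (i : Fin n) : Matrix (Fin n) (Fin 1) ℝ :=
  Matrix.of fun r _ => if r = i then (1 : ℝ) else 0

/-- Standard basis row vector `e_{n,i}ᵀ` (as a `1 × n` matrix). -/
def eRow (n : ℕ) (i : Fin n) : Matrix (Fin 1) (Fin n) ℝ :=
  Matrix.of fun _ c => if c = i then (1 : ℝ) else 0

/-- `E_{n,i} = e_{n,i} e_{n,i}ᵀ`. -/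
def EE (n : ℕ) (i : Fin n) : Matrix (Fin n) (Fin n) ℝ :=
  Matrix.of fun r c => if r = i ∧ c = i then (1 : ℝ) else 0

/-- All-ones row vector `1_nᵀ` (as a `1 × n` matrix). -/
def onesRow (n : ℕ) : Matrix (Fin 1) (Fin n) ℝ := Matrix.of fun _ _ => (1 : ℝ)

/-- A column vector (an `n × 1` matrix) is a simplex vector: nonnegative entries summing to 1. -/
def IsSimplex {n : ℕ} (v : Matrix (Fin n) (Fin 1) ℝ) : Prop :=
  (∀ i, 0 ≤ v i 0) ∧ ∑ i, v i 0 = 1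

/-- A matrix is column-stochastic: each column is a simplex vector. -/
def IsColStochastic {a b : ℕ} (A : Matrix (Fin a) (Fin b) ℝ) : Prop :=
  ∀ j, (∀ i, 0 ≤ A i j) ∧ ∑ i, A i j = 1

/-- The (0-based) index `b * i + j` corresponding to the 1-based index `b(i-1)+j`. -/
def pairIdx {a b : ℕ} (i : Fin a) (j : Fin b) : Fin (a * b) :=
  ⟨b * i.val + j.val, by
    have h : b * (i.val + 1) ≤ b * a := Nat.mul_le_mul le_rfl i.isLt
    have h2 : b * (i.val + 1) = b * i.val + b := by ring
    have h3 : b * a = a * b := Nat.mul_comm b a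
    have h4 : j.val < b := j.isLt
    omega⟩

/-- Commutation matrix `C_{n,m} = ∑_i e_{m,i}ᵀ ⊗ E_n ⊗ e_{m,i}`. -/
def commMat (n m : ℕ) : Matrix (Fin (n * m)) (Fin (n * m)) ℝ :=
  ∑ i : Fin m,
    castM (by ring) (by ring)
      (kron (kron (eRow m i) (1 : Matrix (Fin n) (Fin n) ℝ)) (eCol m i))

/-- Marginalization matrix `M^k_m = E_{N^m} ⊗ 1_Nᵀ ⊗ E_{N^{k-m}}`. -/
def Marg (N k m : ℕ) (hm : m ≤ k) : Matrix (Fin (N ^ k)) (Fin (N ^ (k + 1))) ℝ :=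
  castM (by rw [mul_one, ← pow_add]; exact congrArg (N ^ ·) (by omega))
    (by rw [← pow_succ, ← pow_add]; exact congrArg (N ^ ·) (by omega))
    (kron (kron (1 : Matrix (Fin (N ^ m)) (Fin (N ^ m)) ℝ) (onesRow N))
      (1 : Matrix (Fin (N ^ (k - m))) (Fin (N ^ (k - m))) ℝ))

/-- Branching matrix `B^k_m(𝒬) = ∑_{i,j} E_{N^m,i} ⊗ q_{N^{k-m}(i-1)+j} ⊗ E_{N^{k-m},j}`. -/
def Branch (N k m : ℕ) (hm : m ≤ k) (q : Fin (N ^ k) → Matrix (Fin N) (Fin 1) ℝ) :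
    Matrix (Fin (N ^ (k + 1))) (Fin (N ^ k)) ℝ :=
  castM (by rw [← pow_succ, ← pow_add]; exact congrArg (N ^ ·) (by omega))
    (by rw [mul_one, ← pow_add]; exact congrArg (N ^ ·) (by omega))
    (∑ i : Fin (N ^ m), ∑ j : Fin (N ^ (k - m)),
      kron (kron (EE (N ^ m) i)
          (q (finCongr (by rw [← pow_add]; exact congrArg (N ^ ·) (by omega)) (pairIdx i j))))
        (EE (N ^ (k - m)) j))

/-- Cycling matrix `C^k_m = C_{N^m, N^{k-m}}`. -/
def Cyc (N k m : ℕ) (hm : m ≤ k) : Matrix (Fin (N ^ k)) (Fin (N ^ k)) ℝ :=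
  castM (by rw [← pow_add]; exact congrArg (N ^ ·) (by omega))
    (by rw [← pow_add]; exact congrArg (N ^ ·) (by omega))
    (commMat (N ^ m) (N ^ (k - m)))

/-- The block `Q_i` of a tuple `𝒬`: the `N × N` matrix with columns
`q_{N(i-1)+1}, …, q_{N(i-1)+N}`. -/
def Qblk (N k : ℕ) (hk : 1 ≤ k) (q : Fin (N ^ k) → Matrix (Fin N) (Fin 1) ℝ)
    (i : Fin (N ^ (k - 1))) : Matrix (Fin N) (Fin N) ℝ :=
  Matrix.of fun r c =>
    q (finCongr (by rw [← pow_succ]; exact congrArg (N ^ ·) (by omega)) (pairIdx i c)) r 0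

/-- The k-th order transition matrix `Q^(k) = C_{N,N^{k-1}} ∑_i E_{N^{k-1},i} ⊗ Q_i`. -/
def TransMat (N k : ℕ) (hk : 1 ≤ k) (q : Fin (N ^ k) → Matrix (Fin N) (Fin 1) ℝ) :
    Matrix (Fin (N ^ k)) (Fin (N ^ k)) ℝ :=
  castM (by rw [← pow_succ']; exact congrArg (N ^ ·) (by omega))
      (by rw [← pow_succ']; exact congrArg (N ^ ·) (by omega)) (commMat N (N ^ (k - 1))) *
    ∑ i : Fin (N ^ (k - 1)),
      castM (by rw [← pow_succ]; exact congrArg (N ^ ·) (by omega))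
        (by rw [← pow_succ]; exact congrArg (N ^ ·) (by omega))
        (kron (EE (N ^ (k - 1)) i) (Qblk N k hk q i))

/-- `MChain N m n = M^m_m M^{m+1}_{m+1} ⋯ M^{m+n}_{m+n}`. -/
def MChain (N m : ℕ) : (n : ℕ) → Matrix (Fin (N ^ m)) (Fin (N ^ (m + n + 1))) ℝ
  | 0 => Marg N m m le_rfl
  | n + 1 => MChain N m n * Marg N (m + n + 1) (m + n + 1) le_rfl

/-- `BChain N Q m n = B^{m+n}_{m+n}(𝒬^{(m+n)}) ⋯ B^m_m(𝒬^{(m)})`. -/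
def BChain (N : ℕ) (Q : (j : ℕ) → Fin (N ^ j) → Matrix (Fin N) (Fin 1) ℝ) (m : ℕ) :
    (n : ℕ) → Matrix (Fin (N ^ (m + n + 1))) (Fin (N ^ m)) ℝ
  | 0 => Branch N m m le_rfl (Q m)
  | n + 1 => Branch N (m + n + 1) (m + n + 1) le_rfl (Q (m + n + 1)) * BChain N Q m n

/-- The k‑shift matrix `S(𝒬^(m), …, 𝒬^(k))` with `k = m + n`:
`M^m_m ⋯ M^k_k C^{k+1}_1 B^k_k(𝒬^(k)) ⋯ B^m_m(𝒬^(m))`. -/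
def Shift (N m n : ℕ) (Q : (j : ℕ) → Fin (N ^ j) → Matrix (Fin N) (Fin 1) ℝ) :
    Matrix (Fin (N ^ m)) (Fin (N ^ m)) ℝ :=
  MChain N m n * Cyc N (m + n + 1) 1 (by omega) * BChain N Q m n

/-- ℓ¹ norm of a column vector. -/
def l1 {n : ℕ} (v : Matrix (Fin n) (Fin 1) ℝ) : ℝ := ∑ i, |v i 0|

/-!
Every matrix involved acts simply on pure tensors in `(ℝ^N)^{⊗k}`: `M^k_m` sums out one tensor
factor, `C^k_1` moves the last factor to the front, `B^k_k(𝒬)` sends `e_i` to `e_i ⊗ q_i`, and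
`D(P) := ∑ i, E_{N^k,i} ⊗ P_i` sends `e_i ⊗ v` to `e_i ⊗ P_i v`. Comparing the two sides on pure
tensors gives `M^k_k C^{k+1}_1 = C^k_1 M^k_{k-1}` and `M^k_{k-1} D(P) B^k_k(𝒬) = D(P')`, where the
`j`-th column of `P'_i` is `P_{N(i-1)+j} q_{N(i-1)+j}`. Hence inserting `D(Q̄^(k+1)) = 1` between
`C^{k+1}_1` and `B^k_k` makes the product telescope from the middle outwards.
-/

section KroneckerVectors

variable {a b c d a' b' : ℕ}

theorem pairIdx_eq_finProdFinEquiv (i : Fin a) (j : Fin b) :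
    pairIdx i j = finProdFinEquiv (i, j) :=
  Fin.ext (Nat.add_comm _ _)

theorem exists_pairIdx_eq (x : Fin (a * b)) : ∃ i j, pairIdx i j = x :=
  ⟨x.divNat, x.modNat, Fin.ext (Nat.div_add_mod x.val b)⟩

/-- The Kronecker product `u ⊗ v` of two vectors, in the row-major convention of `kron`. -/
def kronVec (u : Fin a → ℝ) (v : Fin b → ℝ) : Fin (a * b) → ℝ :=
  fun x => u x.divNat * v x.modNat

theorem kronVec_zero_left (v : Fin b → ℝ) : kronVec (0 : Fin a → ℝ) v = 0 :=
  funext fun _ => zero_mul _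

theorem kronVec_zero_right (u : Fin a → ℝ) : kronVec u (0 : Fin b → ℝ) = 0 :=
  funext fun _ => mul_zero _

theorem kronVec_smul_left (s : ℝ) (u : Fin a → ℝ) (v : Fin b → ℝ) :
    kronVec (s • u) v = s • kronVec u v :=
  funext fun _ => mul_assoc _ _ _

theorem sum_smul_kronVec_single (u : Fin a → ℝ) (v : Fin b → ℝ) :
    ∑ j, v j • kronVec u (Pi.single j 1) = kronVec u v := by
  ext x
  simp [kronVec, Finset.sum_apply, Pi.single_apply, mul_comm]

theorem kronVec_single_single (i : Fin a) (j : Fin b) :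
    kronVec (Pi.single i 1) (Pi.single j 1) = Pi.single (pairIdx i j) 1 := by
  ext x
  have hx : x = pairIdx i j ↔ x.divNat = i ∧ x.modNat = j := by
    rw [pairIdx_eq_finProdFinEquiv, ← Equiv.symm_apply_eq, Prod.ext_iff]
    rfl
  simp only [kronVec, Pi.single_apply, hx, ite_zero_mul_ite_zero, mul_one]

theorem kronVec_comp_cast_left (h : a = a') (u : Fin a' → ℝ) (v : Fin b → ℝ) :
    kronVec (u ∘ Fin.cast h) v = kronVec u v ∘ Fin.cast (congrArg (· * b) h) := by
  subst h
  rfl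

theorem kronVec_comp_cast_right (h : b = b') (u : Fin a → ℝ) (v : Fin b' → ℝ) :
    kronVec u (v ∘ Fin.cast h) = kronVec u v ∘ Fin.cast (congrArg (a * ·) h) := by
  subst h
  rfl

theorem kronVec_const_right (hb : b = 1) (u : Fin a → ℝ) (s : ℝ) :
    kronVec u (fun _ : Fin b => s) = s • (u ∘ Fin.cast (by rw [hb, mul_one])) := by
  subst hb
  ext x
  have hx : x.divNat = Fin.cast (mul_one a) x := Fin.ext (Nat.div_one _)
  simp only [kronVec, hx, Pi.smul_apply, Function.comp_apply, smul_eq_mul, mul_comm]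

theorem kronVec_one_comp_cast (hb : b = 1) (u : Fin a → ℝ) (h : c = a * b) (h' : c = a) :
    kronVec u 1 ∘ Fin.cast h = u ∘ Fin.cast h' := by
  rw [Pi.one_def, kronVec_const_right hb, one_smul]
  rfl

theorem single_comp_cast (h : a = b) (i : Fin b) :
    (Pi.single i 1 : Fin b → ℝ) ∘ Fin.cast h = Pi.single (Fin.cast h.symm i) 1 := by
  subst h
  rfl

theorem kronVec_const_left (v : Fin b → ℝ) (s : ℝ) :
    kronVec (fun _ : Fin 1 => s) v = s • (v ∘ Fin.cast (one_mul b)) := by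
  ext x
  have hx : x.modNat = Fin.cast (one_mul b) x :=
    Fin.ext (Nat.mod_eq_of_lt (Fin.cast (one_mul b) x).isLt)
  simp only [kronVec, hx, Pi.smul_apply, Function.comp_apply, smul_eq_mul]

theorem kronVec_assoc (u : Fin a → ℝ) (v : Fin b → ℝ) (w : Fin c → ℝ) :
    kronVec u (kronVec v w) = kronVec (kronVec u v) w ∘ Fin.cast (mul_assoc a b c).symm := by
  ext x
  have hdiv : (Fin.cast (mul_assoc a b c).symm x).divNat.divNat = x.divNat :=
    Fin.ext (by simp [Nat.div_div_eq_div_mul, mul_comm c b])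
  have hmid : (Fin.cast (mul_assoc a b c).symm x).divNat.modNat = x.modNat.divNat :=
    Fin.ext (by simp [Nat.mod_mul_left_div_self])
  have hmod : (Fin.cast (mul_assoc a b c).symm x).modNat = x.modNat.modNat :=
    Fin.ext (by simp)
  simp only [kronVec, Function.comp_apply, hdiv, hmid, hmod, mul_assoc]

theorem kron_mulVec_kronVec (A : Matrix (Fin a) (Fin b) ℝ) (B : Matrix (Fin c) (Fin d) ℝ)
    (u : Fin b → ℝ) (v : Fin d → ℝ) :
    kron A B *ᵥ kronVec u v = kronVec (A *ᵥ u) (B *ᵥ v) := by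
  ext x
  simp only [mulVec, dotProduct, kron, kronVec, of_apply]
  rw [Finset.sum_mul_sum, ← Fintype.sum_prod_type', ← finProdFinEquiv.symm.sum_comp]
  exact Finset.sum_congr rfl fun _ _ => mul_mul_mul_comm _ _ _ _

theorem castM_mulVec_comp_cast (ha : a = a') (hb : b = b') (hb' : b' = b)
    (A : Matrix (Fin a) (Fin b) ℝ) (v : Fin b → ℝ) :
    castM ha hb A *ᵥ (v ∘ Fin.cast hb') = (A *ᵥ v) ∘ Fin.cast ha.symm := by
  subst ha hb
  rfl

end KroneckerVectors

section ElementaryMatrices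

variable {n m : ℕ}

theorem EE_mulVec_single (i j : Fin n) :
    EE n i *ᵥ Pi.single j 1 = if j = i then Pi.single j 1 else 0 := by
  ext r
  by_cases hji : j = i <;> simp [EE, hji, Pi.single_apply]

theorem onesRow_mulVec (v : Fin n → ℝ) : onesRow n *ᵥ v = fun _ => ∑ j, v j := by
  ext r
  simp [onesRow, mulVec, dotProduct]

theorem eRow_mulVec (i : Fin n) (v : Fin n → ℝ) : eRow n i *ᵥ v = fun _ => v i := by
  ext r
  simp [eRow, mulVec, dotProduct]

theorem mulVec_one_eq_col_zero (A : Matrix (Fin n) (Fin 1) ℝ) : A *ᵥ 1 = A.col 0 := by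
  ext r
  simp [mulVec, dotProduct]

theorem eCol_mulVec_one (i : Fin n) : eCol n i *ᵥ 1 = Pi.single i 1 := by
  ext r
  simp [eCol, mulVec, dotProduct, Pi.single_apply]

theorem commMat_mulVec_kronVec (u : Fin m → ℝ) (v : Fin n → ℝ) :
    commMat n m *ᵥ (kronVec u v ∘ Fin.cast (mul_comm n m)) = kronVec v u := by
  have hdim : m * n * 1 = n * m := by ring
  have hdim' : 1 * n * m = n * m := by ring
  have hterm (i : Fin m) :
      castM hdim' hdim (kron (kron (eRow m i) 1) (eCol m i)) *ᵥ
        (kronVec u v ∘ Fin.cast (mul_comm n m)) = u i • kronVec v (Pi.single i 1) := by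
    rw [← kronVec_one_comp_cast rfl (kronVec u v) hdim.symm, castM_mulVec_comp_cast,
      kron_mulVec_kronVec, kron_mulVec_kronVec, eRow_mulVec, one_mulVec, eCol_mulVec_one,
      kronVec_const_left, kronVec_smul_left, kronVec_comp_cast_left]
    rfl
  rw [commMat, sum_mulVec, Finset.sum_congr rfl fun i _ => hterm i, sum_smul_kronVec_single]

end ElementaryMatrices

section MarkovMatrices

variable {N k m : ℕ}

theorem Cyc_mulVec_kronVec (hm : m ≤ k) (u : Fin (N ^ (k - m)) → ℝ) (v : Fin (N ^ m) → ℝ)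
    (h : N ^ k = N ^ (k - m) * N ^ m) (h' : N ^ k = N ^ m * N ^ (k - m)) :
    Cyc N k m hm *ᵥ (kronVec u v ∘ Fin.cast h) = kronVec v u ∘ Fin.cast h' := by
  rw [← commMat_mulVec_kronVec u v]
  exact castM_mulVec_comp_cast _ _ h' _ (kronVec u v ∘ Fin.cast (mul_comm _ _))

theorem Marg_mulVec_kronVec (hm : m ≤ k) (u : Fin (N ^ m) → ℝ) (v : Fin N → ℝ)
    (w : Fin (N ^ (k - m)) → ℝ) (h : N ^ (k + 1) = N ^ m * N * N ^ (k - m))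
    (h' : N ^ k = N ^ m * N ^ (k - m)) :
    Marg N k m hm *ᵥ (kronVec (kronVec u v) w ∘ Fin.cast h) =
      (∑ j, v j) • (kronVec u w ∘ Fin.cast h') := by
  rw [Marg, castM_mulVec_comp_cast, kron_mulVec_kronVec, kron_mulVec_kronVec, onesRow_mulVec,
    one_mulVec, one_mulVec, kronVec_const_right rfl, kronVec_smul_left, kronVec_comp_cast_left]
  rfl

theorem Branch_mulVec_kronVec_single (hm : m ≤ k) (q : Fin (N ^ k) → Matrix (Fin N) (Fin 1) ℝ)
    (i : Fin (N ^ m)) (j : Fin (N ^ (k - m))) (h : N ^ k = N ^ m * N ^ (k - m))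
    (h' : N ^ (k + 1) = N ^ m * N * N ^ (k - m)) :
    Branch N k m hm q *ᵥ (kronVec (Pi.single i 1) (Pi.single j 1) ∘ Fin.cast h) =
      kronVec (kronVec (Pi.single i 1) ((q (Fin.cast h.symm (pairIdx i j))).col 0))
        (Pi.single j 1) ∘ Fin.cast h' := by
  have hunit : kronVec (Pi.single i 1) (Pi.single j 1) ∘ Fin.cast h =
      kronVec (kronVec (Pi.single i 1) (1 : Fin 1 → ℝ)) (Pi.single j 1) ∘
        Fin.cast (h.trans (by rw [mul_one])) := by
    rw [Pi.one_def, kronVec_const_right rfl, one_smul, kronVec_comp_cast_left]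
    rfl
  rw [hunit, Branch, castM_mulVec_comp_cast, sum_mulVec]
  simp only [sum_mulVec, kron_mulVec_kronVec, EE_mulVec_single, mulVec_one_eq_col_zero]
  rw [Finset.sum_eq_single_of_mem i (Finset.mem_univ i) fun i' _ hi' => by
      simp [hi'.symm, kronVec_zero_left],
    Finset.sum_eq_single_of_mem j (Finset.mem_univ j) fun j' _ hj' => by
      simp [hj'.symm, kronVec_zero_right], if_pos rfl, if_pos rfl]
  rfl

end MarkovMatrices

section Words

variable {N k : ℕ}

/-- The word `i` of length `k` over an alphabet of `N` letters extended by the last letter `j`;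
words are identified with their positions in the lexicographic order. -/
def snocIdx (i : Fin (N ^ k)) (j : Fin N) : Fin (N ^ (k + 1)) :=
  Fin.cast (pow_succ N k).symm (pairIdx i j)

/-- The Kronecker product `u ⊗ v` with `v` in the last tensor factor of `(ℝ^N)^{⊗(k+1)}`. -/
def snocVec (u : Fin (N ^ k) → ℝ) (v : Fin N → ℝ) : Fin (N ^ (k + 1)) → ℝ :=
  kronVec u v ∘ Fin.cast (pow_succ N k)

/-- The Kronecker product `v ⊗ u` with `v` in the first tensor factor of `(ℝ^N)^{⊗(k+1)}`. -/
def consVec (v : Fin N → ℝ) (u : Fin (N ^ k) → ℝ) : Fin (N ^ (k + 1)) → ℝ :=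
  kronVec v u ∘ Fin.cast (pow_succ' N k)

theorem snocVec_single_single (i : Fin (N ^ k)) (j : Fin N) :
    snocVec (Pi.single i 1) (Pi.single j 1) = Pi.single (snocIdx i j) 1 := by
  rw [snocVec, kronVec_single_single, single_comp_cast, snocIdx]

theorem consVec_snocVec (w : Fin N → ℝ) (u : Fin (N ^ k) → ℝ) (v : Fin N → ℝ) :
    consVec w (snocVec u v) = snocVec (consVec w u) v := by
  rw [consVec, snocVec, snocVec, consVec, kronVec_comp_cast_left, kronVec_comp_cast_right,
    kronVec_assoc]
  rfl

theorem exists_snocIdx_eq (x : Fin (N ^ (k + 1))) : ∃ i j, snocIdx i j = x := by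
  obtain ⟨i, j, hx⟩ := exists_pairIdx_eq (Fin.cast (pow_succ N k) x)
  exact ⟨i, j, by rw [snocIdx, hx, Fin.cast_cast, Fin.cast_eq_self]⟩

theorem ext_of_mulVec_snocVec_single {n : ℕ} {A B : Matrix (Fin n) (Fin (N ^ (k + 1))) ℝ}
    (h : ∀ i j, A *ᵥ snocVec (Pi.single i 1) (Pi.single j 1) =
      B *ᵥ snocVec (Pi.single i 1) (Pi.single j 1)) : A = B := by
  refine ext_of_mulVec_single fun x => ?_
  obtain ⟨i, j, rfl⟩ := exists_snocIdx_eq x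
  rw [← snocVec_single_single]
  exact h i j

theorem Cyc_one_mulVec_snocVec (u : Fin (N ^ k) → ℝ) (v : Fin N → ℝ) :
    Cyc N (k + 1) 1 (Nat.le_add_left 1 k) *ᵥ snocVec u v = consVec v u := by
  have hcyc := Cyc_mulVec_kronVec (k := k + 1) (Nat.le_add_left 1 k) u (v ∘ Fin.cast (pow_one N))
    (by rw [pow_one]; rfl) (by rw [pow_one]; exact pow_succ' N k)
  rw [kronVec_comp_cast_right, kronVec_comp_cast_left] at hcyc
  exact hcyc

theorem Marg_self_mulVec_snocVec (u : Fin (N ^ k) → ℝ) (v : Fin N → ℝ) :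
    Marg N k k le_rfl *ᵥ snocVec u v = (∑ j, v j) • u := by
  have hpow : N ^ (k - k) = 1 := by rw [Nat.sub_self, pow_zero]
  have hmarg := Marg_mulVec_kronVec (le_refl k) u v 1 (by rw [hpow, mul_one, pow_succ])
    (by rw [hpow, mul_one])
  rw [kronVec_one_comp_cast hpow _ _ (pow_succ N k), kronVec_one_comp_cast hpow _ _ rfl] at hmarg
  exact hmarg

theorem Marg_succ_mulVec_snocVec (u : Fin (N ^ k) → ℝ) (v w : Fin N → ℝ) :
    Marg N (k + 1) k k.le_succ *ᵥ snocVec (snocVec u v) w = (∑ j, v j) • snocVec u w := by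
  have hpow : N ^ (k + 1 - k) = N := by rw [Nat.add_sub_cancel_left, pow_one]
  have hmarg := Marg_mulVec_kronVec k.le_succ u v (w ∘ Fin.cast hpow)
    (by rw [hpow, pow_succ, pow_succ]) (by rw [hpow, pow_succ])
  rw [kronVec_comp_cast_right, kronVec_comp_cast_right] at hmarg
  rw [snocVec, snocVec, kronVec_comp_cast_left]
  exact hmarg

theorem Branch_self_mulVec_single (q : Fin (N ^ k) → Matrix (Fin N) (Fin 1) ℝ)
    (i : Fin (N ^ k)) :
    Branch N k k le_rfl q *ᵥ Pi.single i 1 = snocVec (Pi.single i 1) ((q i).col 0) := by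
  have hpow : N ^ (k - k) = 1 := by rw [Nat.sub_self, pow_zero]
  let z : Fin (N ^ (k - k)) := Fin.cast hpow.symm 0
  have hone : (Pi.single z 1 : Fin (N ^ (k - k)) → ℝ) = 1 := by
    rw [← single_comp_cast hpow]
    ext x
    simp [Subsingleton.elim (Fin.cast hpow x) 0]
  have hidx : Fin.cast (by rw [hpow, mul_one]) (pairIdx i z) = i :=
    Fin.ext (by simp [pairIdx, z])
  have hbranch := Branch_mulVec_kronVec_single le_rfl q i z (by rw [hpow, mul_one])
    (by rw [hpow, mul_one, pow_succ])
  rw [hidx, hone, kronVec_one_comp_cast hpow _ _ rfl,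
    kronVec_one_comp_cast hpow _ _ (pow_succ N k)] at hbranch
  exact hbranch

theorem Marg_self_mul_Cyc_one :
    Marg N (k + 1) (k + 1) le_rfl * Cyc N (k + 2) 1 (Nat.le_add_left 1 (k + 1)) =
      Cyc N (k + 1) 1 (Nat.le_add_left 1 k) * Marg N (k + 1) k k.le_succ := by
  refine ext_of_mulVec_snocVec_single fun x l => ?_
  obtain ⟨i, j, rfl⟩ := exists_snocIdx_eq x
  rw [← snocVec_single_single, ← mulVec_mulVec, ← mulVec_mulVec, Cyc_one_mulVec_snocVec,
    consVec_snocVec, Marg_self_mulVec_snocVec, Marg_succ_mulVec_snocVec, mulVec_smul,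
    Cyc_one_mulVec_snocVec]

/-- The block-diagonal matrix `∑ i, E_{N^k,i} ⊗ P_i`, which applies `P_i` to the letter following
the word `i`; the size is cast from `N^k * N` to `N^(k+1)`. -/
def wordBlockDiag (P : Fin (N ^ k) → Matrix (Fin N) (Fin N) ℝ) :
    Matrix (Fin (N ^ (k + 1))) (Fin (N ^ (k + 1))) ℝ :=
  ∑ i, castM (pow_succ N k).symm (pow_succ N k).symm (kron (EE (N ^ k) i) (P i))

theorem wordBlockDiag_mulVec_snocVec_single (P : Fin (N ^ k) → Matrix (Fin N) (Fin N) ℝ)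
    (i : Fin (N ^ k)) (v : Fin N → ℝ) :
    wordBlockDiag P *ᵥ snocVec (Pi.single i 1) v = snocVec (Pi.single i 1) (P i *ᵥ v) := by
  simp only [wordBlockDiag, snocVec, sum_mulVec, castM_mulVec_comp_cast, kron_mulVec_kronVec,
    EE_mulVec_single]
  rw [Finset.sum_eq_single_of_mem i (Finset.mem_univ i) fun i' _ hi' => by
    rw [if_neg hi'.symm, kronVec_zero_left, Pi.zero_comp], if_pos rfl]

theorem wordBlockDiag_one :
    wordBlockDiag (fun _ : Fin (N ^ k) => (1 : Matrix (Fin N) (Fin N) ℝ)) = 1 :=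
  ext_of_mulVec_snocVec_single fun i j => by
    rw [wordBlockDiag_mulVec_snocVec_single, one_mulVec, one_mulVec]

theorem Marg_mul_wordBlockDiag_mul_Branch {P : Fin (N ^ (k + 1)) → Matrix (Fin N) (Fin N) ℝ}
    {P' : Fin (N ^ k) → Matrix (Fin N) (Fin N) ℝ}
    {q : Fin (N ^ (k + 1)) → Matrix (Fin N) (Fin 1) ℝ}
    (h : ∀ i j r, P' i r j = (P (snocIdx i j) * q (snocIdx i j)) r 0) :
    Marg N (k + 1) k k.le_succ * (wordBlockDiag P * Branch N (k + 1) (k + 1) le_rfl q) =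
      wordBlockDiag P' := by
  refine ext_of_mulVec_snocVec_single fun i j => ?_
  have hcol : P' i *ᵥ Pi.single j 1 = P (snocIdx i j) *ᵥ (q (snocIdx i j)).col 0 := by
    rw [mulVec_single_one]
    exact funext (h i j)
  have hsum : ∑ l, (Pi.single j 1 : Fin N → ℝ) l = 1 := Fintype.sum_pi_single' j 1
  rw [wordBlockDiag_mulVec_snocVec_single, hcol, snocVec_single_single, ← mulVec_mulVec,
    ← mulVec_mulVec, Branch_self_mulVec_single, wordBlockDiag_mulVec_snocVec_single,
    ← snocVec_single_single, Marg_succ_mulVec_snocVec, hsum, one_smul]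

theorem Marg_mul_Cyc_mul_wordBlockDiag_mul_Branch
    {P : Fin (N ^ (k + 1)) → Matrix (Fin N) (Fin N) ℝ}
    {P' : Fin (N ^ k) → Matrix (Fin N) (Fin N) ℝ}
    {q : Fin (N ^ (k + 1)) → Matrix (Fin N) (Fin 1) ℝ}
    (h : ∀ i j r, P' i r j = (P (snocIdx i j) * q (snocIdx i j)) r 0) :
    Marg N (k + 1) (k + 1) le_rfl * Cyc N (k + 2) 1 (Nat.le_add_left 1 (k + 1)) *
        (wordBlockDiag P * Branch N (k + 1) (k + 1) le_rfl q) =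
      Cyc N (k + 1) 1 (Nat.le_add_left 1 k) * wordBlockDiag P' := by
  rw [Marg_self_mul_Cyc_one, Matrix.mul_assoc, Marg_mul_wordBlockDiag_mul_Branch h]

theorem MChain_mul_Cyc_mul_wordBlockDiag_mul_BChain
    (Q : (j : ℕ) → Fin (N ^ j) → Matrix (Fin N) (Fin 1) ℝ)
    (P : (t : ℕ) → Fin (N ^ t) → Matrix (Fin N) (Fin N) ℝ) (n : ℕ)
    (h : ∀ t, k ≤ t → t ≤ k + n → ∀ i j r,
      P t i r j = (P (t + 1) (snocIdx i j) * Q (t + 1) (snocIdx i j)) r 0) :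
    MChain N (k + 1) n * Cyc N (k + 1 + n + 1) 1 (Nat.le_add_left 1 (k + 1 + n)) *
        (wordBlockDiag (P (k + 1 + n)) * BChain N Q (k + 1) n) =
      Cyc N (k + 1) 1 (Nat.le_add_left 1 k) * wordBlockDiag (P k) := by
  induction n with
  | zero => exact Marg_mul_Cyc_mul_wordBlockDiag_mul_Branch (h k le_rfl le_rfl)
  | succ n ih =>
    have hstep := Marg_mul_Cyc_mul_wordBlockDiag_mul_Branch
      (h (k + 1 + n) (by omega) (by omega))
    calc
      _ = MChain N (k + 1) n * (Marg N (k + 1 + n + 1) (k + 1 + n + 1) le_rfl *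
            Cyc N (k + 1 + n + 2) 1 (Nat.le_add_left 1 (k + 1 + n + 1)) *
            (wordBlockDiag (P (k + 1 + n + 1)) *
              Branch N (k + 1 + n + 1) (k + 1 + n + 1) le_rfl (Q (k + 1 + n + 1)))) *
          BChain N Q (k + 1) n := by
        simp only [MChain, BChain, Matrix.mul_assoc]
        rfl
      _ = MChain N (k + 1) n * Cyc N (k + 1 + n + 1) 1 (Nat.le_add_left 1 (k + 1 + n)) *
          (wordBlockDiag (P (k + 1 + n)) * BChain N Q (k + 1) n) := by
        rw [hstep]
        simp only [Matrix.mul_assoc]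
      _ = _ := ih fun t hkt htn => h t hkt (by omega)

end Words

theorem stmt7_general (N m k : ℕ) (hm : 1 ≤ m) (hmk : m ≤ k)
    (Q : (j : ℕ) → Fin (N ^ j) → Matrix (Fin N) (Fin 1) ℝ)
    (Qbar : (t : ℕ) → Fin (N ^ t) → Matrix (Fin N) (Fin N) ℝ)
    (hbase : ∀ i : Fin (N ^ k), Qbar k i = 1)
    (hrec : ∀ t, m ≤ t + 1 → t + 1 ≤ k → ∀ (i : Fin (N ^ t)) (j r : Fin N),
      Qbar t i r j = (Qbar (t + 1) (pairIdx i j) * Q (t + 1) (pairIdx i j)) r 0) :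
    Shift N m (k - m) Q =
      Cyc N m 1 hm *
        ∑ i : Fin (N ^ (m - 1)),
          castM (by rw [← pow_succ]; exact congrArg (N ^ ·) (by omega))
            (by rw [← pow_succ]; exact congrArg (N ^ ·) (by omega))
            (kron (EE (N ^ (m - 1)) i) (Qbar (m - 1) i)) := by
  obtain ⟨t, rfl⟩ : ∃ t, m = t + 1 := ⟨m - 1, by omega⟩
  obtain ⟨n, rfl⟩ := Nat.exists_eq_add_of_le hmk
  have hlast : wordBlockDiag (Qbar (t + 1 + n)) = 1 := by
    rw [funext hbase, wordBlockDiag_one]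
  have hchain := MChain_mul_Cyc_mul_wordBlockDiag_mul_BChain (k := t) Q Qbar n
    fun u htu hun => hrec u (by omega) (by omega)
  rw [hlast, Matrix.one_mul] at hchain
  rw [Nat.add_sub_cancel_left]
  exact hchain

/-- recursive form of the k-shift matrix. With `Qbar t` playing the
role of `Q̄^(t+1)` (so `Q̄^(k+1) = E_N` and for `m ≤ l ≤ k` the `j`-th column of
`Q̄^(l)_i` is `Q̄^(l+1)_{N(i-1)+j} q^(l)_{N(i-1)+j}`), we have
`S(𝒬^(m), …, 𝒬^(k)) = C^m_1 ∑_i E_{N^{m-1},i} ⊗ Q̄^(m)_i`. -/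
theorem stmt7 (N m k : ℕ) (hN : 1 ≤ N) (hm : 1 ≤ m) (hmk : m ≤ k)
    (Q : (j : ℕ) → Fin (N ^ j) → Matrix (Fin N) (Fin 1) ℝ)
    (hQ : ∀ j, m ≤ j → j ≤ k → ∀ i, IsSimplex (Q j i))
    (Qbar : (t : ℕ) → Fin (N ^ t) → Matrix (Fin N) (Fin N) ℝ)
    (hbase : ∀ i : Fin (N ^ k), Qbar k i = 1)
    (hrec : ∀ t, m ≤ t + 1 → t + 1 ≤ k → ∀ (i : Fin (N ^ t)) (j r : Fin N),
      Qbar t i r j = (Qbar (t + 1) (pairIdx i j) * Q (t + 1) (pairIdx i j)) r 0) :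
    Shift N m (k - m) Q =
      Cyc N m 1 hm *
        ∑ i : Fin (N ^ (m - 1)),
          castM (by rw [← pow_succ]; exact congrArg (N ^ ·) (by omega))
            (by rw [← pow_succ]; exact congrArg (N ^ ·) (by omega))
            (kron (EE (N ^ (m - 1)) i) (Qbar (m - 1) i)) :=
  stmt7_general N m k hm hmk Q Qbar hbase hrec
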